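/- arXiv:1410.6838 — 2 statements merged into one kernel-verified Lean document; each statement's English description precedes it below -/
import Mathlib

section
/- Iterated syzygies preserve stable degeneration: let A be a finite-dimensional k-algebra and let X, Y be finitely generated left A-modules with X ≤_st Y. Let (X_i)_{i≥0} and (Y_i)_{i≥0} be syzygy sequences for X and Y respectively. Then for every natural number j, X_j ≤_st Y_j. -/
universe u

/-- `DegLE A M N` : `M ≤_deg N`, i.e. there exist a finitely generated `A`-module `Z`
and a short exact sequence `0 → N → M ⊕ Z → Z → 0`. -/
def DegLE (A : Type u) [Ring A] (M : Type u) [AddCommGroup M] [Module A M]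
    (N : Type u) [AddCommGroup N] [Module A N] : Prop :=
  ∃ (Z : Type u) (_ : AddCommGroup Z) (_ : Module A Z), Module.Finite A Z ∧
    ∃ (f : N →ₗ[A] M × Z) (g : M × Z →ₗ[A] Z),
      Function.Injective f ∧ Function.Surjective g ∧ LinearMap.range f = LinearMap.ker g

/-- `StDegLE A X Y` : `X ≤_st Y`, i.e. there exist finitely generated projective
`A`-modules `P` and `Q` with `X ⊕ P ≤_deg Y ⊕ Q`. -/
def StDegLE (A : Type u) [Ring A] (X : Type u) [AddCommGroup X] [Module A X]
    (Y : Type u) [AddCommGroup Y] [Module A Y] : Prop :=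
  ∃ (P : Type u) (_ : AddCommGroup P) (_ : Module A P)
    (Q : Type u) (_ : AddCommGroup Q) (_ : Module A Q),
    Module.Finite A P ∧ Module.Projective A P ∧
    Module.Finite A Q ∧ Module.Projective A Q ∧
    DegLE A (X × P) (Y × Q)

/-- A syzygy sequence for `Xs 0`: for each `i` there is a short exact sequence
`0 → Xs (i+1) → P → Xs i → 0` with `P` finitely generated projective. -/
def IsSyzygySeq (A : Type u) [Ring A] (Xs : ℕ → Type u)
    [∀ i, AddCommGroup (Xs i)] [∀ i, Module A (Xs i)] : Prop :=
  ∀ i, ∃ (P : Type u) (_ : AddCommGroup P) (_ : Module A P),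
    Module.Finite A P ∧ Module.Projective A P ∧
    ∃ (f : Xs (i + 1) →ₗ[A] P) (g : P →ₗ[A] Xs i),
      Function.Injective f ∧ Function.Surjective g ∧ LinearMap.range f = LinearMap.ker g

/-! Read `M ≤_deg N` as: `M ⊕ Z` is an extension of `Z` by `N`. Over a left Noetherian ring, `Z` has
a finitely generated syzygy `Z'`. The horseshoe lemma produces a syzygy `E'` of `M ⊕ Z` which is an
extension of `Z'` by the given syzygy `N'` of `N`, and Schanuel's lemma compares `E'` with the other
syzygy `M' ⊕ Z'` of `M ⊕ Z`: they agree after adding projectives `R` to `E'` and `S` to `M' ⊕ Z'`.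
Hence `(M' ⊕ S) ⊕ Z'` is an extension of `Z'` by `N' ⊕ R`, that is, `M' ⊕ S ≤_deg N' ⊕ R`. -/

section Extension

variable {A : Type*} [Ring A]
  {N N' E E' Z Z' K L M P Q U V : Type*}
  [AddCommGroup N] [Module A N] [AddCommGroup N'] [Module A N'] [AddCommGroup E] [Module A E]
  [AddCommGroup E'] [Module A E'] [AddCommGroup Z] [Module A Z] [AddCommGroup Z'] [Module A Z']
  [AddCommGroup K] [Module A K] [AddCommGroup L] [Module A L] [AddCommGroup M] [Module A M]
  [AddCommGroup P] [Module A P] [AddCommGroup Q] [Module A Q] [AddCommGroup U] [Module A U]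
  [AddCommGroup V] [Module A V]

variable (A N E Z) in
/-- `E` is an extension of `Z` by `N`: there is a short exact sequence `0 → N → E → Z → 0`. The maps
are existentially quantified, since degenerations and syzygies only ask for their existence. -/
def IsExtension : Prop :=
  ∃ (f : N →ₗ[A] E) (g : E →ₗ[A] Z),
    Function.Injective f ∧ Function.Surjective g ∧ Function.Exact f g

theorem isExtension_iff_range_eq_ker :
    IsExtension A N E Z ↔ ∃ (f : N →ₗ[A] E) (g : E →ₗ[A] Z),
      Function.Injective f ∧ Function.Surjective g ∧ LinearMap.range f = LinearMap.ker g := by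
  simp only [IsExtension, LinearMap.exact_iff, eq_comm (a := LinearMap.ker _)]

theorem isExtension_ker {g : E →ₗ[A] Z} (hg : Function.Surjective g) :
    IsExtension A (LinearMap.ker g) E Z :=
  ⟨(LinearMap.ker g).subtype, g, Subtype.val_injective, hg, g.exact_subtype_ker_map⟩

theorem isExtension_eqLocus {i : K →ₗ[A] P} {p : P →ₗ[A] M} (hi : Function.Injective i)
    (hp : Function.Surjective p) (hip : Function.Exact i p) (q : Q →ₗ[A] M) :
    IsExtension A K (LinearMap.eqLocus (p ∘ₗ .fst A P Q) (q ∘ₗ .snd A P Q)) Q := by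
  refine ⟨(LinearMap.inl A P Q ∘ₗ i).codRestrict _ fun x => ?_,
    LinearMap.snd A P Q ∘ₗ Submodule.subtype _, ?_, fun y => ?_, ?_⟩
  · simp [hip.apply_apply_eq_zero]
  · exact fun _ _ h => hi (congrArg (fun w => w.1.1) h)
  · obtain ⟨x, hx⟩ := hp (q y)
    exact ⟨⟨(x, y), hx⟩, rfl⟩
  · rintro ⟨⟨x, y⟩, hxy⟩
    have hxy : p x = q y := hxy
    constructor
    · rintro rfl
      obtain ⟨z, rfl⟩ := (hip x).1 (hxy.trans (map_zero q))
      exact ⟨z, rfl⟩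
    · rintro ⟨z, hz⟩
      exact (congrArg (fun w => w.1.2) hz).symm

namespace IsExtension

theorem congr_middle (h : IsExtension A N E Z) (e : E ≃ₗ[A] E') : IsExtension A N E' Z := by
  obtain ⟨f, g, hf, hg, hfg⟩ := h
  exact ⟨e ∘ₗ f, g ∘ₗ e.symm, e.injective.comp hf, hg.comp e.symm.surjective,
    (LinearEquiv.conj_exact_iff_exact f g e).2 hfg⟩

theorem prod (h : IsExtension A N E Z) (h' : IsExtension A N' E' Z') :
    IsExtension A (N × N') (E × E') (Z × Z') := by
  obtain ⟨f, g, hf, hg, hfg⟩ := h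
  obtain ⟨f', g', hf', hg', hfg'⟩ := h'
  refine ⟨f.prodMap f', g.prodMap g', hf.prodMap hf', hg.prodMap hg', LinearMap.exact_iff.2 ?_⟩
  rw [LinearMap.ker_prodMap, LinearMap.range_prodMap, hfg.linearMap_ker_eq,
    hfg'.linearMap_ker_eq]

variable (P) in
theorem prod_left_middle (h : IsExtension A N E Z) : IsExtension A (N × P) (E × P) Z := by
  obtain ⟨f, g, hf, hg, hfg⟩ := h
  refine ⟨f.prodMap .id, g ∘ₗ .fst A E P, hf.prodMap Function.injective_id,
    hg.comp Prod.fst_surjective, fun ⟨x, p⟩ => ?_⟩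
  simp [hfg x]

variable (P) in
theorem prod_middle_right (h : IsExtension A N E Z) : IsExtension A N (E × P) (Z × P) := by
  obtain ⟨f, g, hf, hg, hfg⟩ := h
  refine ⟨.inl A E P ∘ₗ f, g.prodMap .id, LinearMap.inl_injective.comp hf,
    hg.prodMap Function.surjective_id, fun ⟨x, p⟩ => ?_⟩
  simp [hfg x, Prod.ext_iff, eq_comm (a := p)]

theorem nonempty_linearEquiv_prod [Module.Projective A P] (h : IsExtension A N E P) :
    Nonempty (E ≃ₗ[A] N × P) := by
  obtain ⟨f, g, hf, hg, hfg⟩ := h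
  obtain ⟨s, hs⟩ := Module.projective_lifting_property g .id hg
  exact ⟨(hfg.splitSurjectiveEquiv hf ⟨s, hs⟩).1⟩

theorem exists_pullback (hP : IsExtension A K P M) (hQ : IsExtension A L Q M) :
    ∃ W : Submodule A (P × Q), IsExtension A K W Q ∧ IsExtension A L W P := by
  obtain ⟨i, p, hi, hp, hip⟩ := hP
  obtain ⟨j, q, hj, hq, hjq⟩ := hQ
  let swap := (LinearEquiv.prodComm A Q P).ofSubmodules
    (LinearMap.eqLocus (q ∘ₗ .fst A Q P) (p ∘ₗ .snd A Q P))
    (LinearMap.eqLocus (p ∘ₗ .fst A P Q) (q ∘ₗ .snd A P Q)) (by ext; simp [eq_comm])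
  exact ⟨_, isExtension_eqLocus hi hp hip q,
    (isExtension_eqLocus hj hq hjq p).congr_middle swap⟩

-- The kernel of `U → V → M` is realised as the pullback of `U → V ← L`.
theorem exists_comp (hU : IsExtension A K U V) (hV : IsExtension A L V M) :
    ∃ J : Submodule A (U × L), IsExtension A J U M ∧ IsExtension A K J L := by
  obtain ⟨i, p, hi, hp, hip⟩ := hU
  obtain ⟨j, q, hj, hq, hjq⟩ := hV
  refine ⟨_, ⟨LinearMap.fst A U L ∘ₗ Submodule.subtype _, q ∘ₗ p, ?_, hq.comp hp, fun u => ?_⟩,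
    isExtension_eqLocus hi hp hip j⟩
  · rintro ⟨⟨u, x⟩, hx⟩ ⟨⟨u', y⟩, hy⟩ huu'
    obtain rfl : u = u' := huu'
    obtain rfl : x = y := hj (hx.symm.trans hy)
    rfl
  · simp [hjq (p u), eq_comm]

theorem schanuel [Module.Projective A P] [Module.Projective A Q]
    (hP : IsExtension A K P M) (hQ : IsExtension A L Q M) :
    Nonempty ((K × Q) ≃ₗ[A] (L × P)) := by
  obtain ⟨W, hWQ, hWP⟩ := hP.exists_pullback hQ
  obtain ⟨eQ⟩ := hWQ.nonempty_linearEquiv_prod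
  obtain ⟨eP⟩ := hWP.nonempty_linearEquiv_prod
  exact ⟨eQ.symm.trans eP⟩

-- The pullback of `E → Z ← Q` is `N × Q`, so `P × Q` covers `E` by way of `N × Q`.
theorem horseshoe [Module.Projective A Q] (h : IsExtension A N E Z)
    (hN : IsExtension A N' P N) (hZ : IsExtension A Z' Q Z) :
    ∃ E' : Submodule A ((P × Q) × Z'),
      IsExtension A E' (P × Q) E ∧ IsExtension A N' E' Z' := by
  obtain ⟨W, hWQ, hWE⟩ := h.exists_pullback hZ
  obtain ⟨e⟩ := hWQ.nonempty_linearEquiv_prod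
  exact (hN.prod_middle_right Q).exists_comp (hWE.congr_middle e)

end IsExtension

end Extension

section Syzygy

/-- `K` is a (first) syzygy of `M`: the kernel of a surjection onto `M` from a finitely generated
projective module, which is not required to be a projective cover. -/
def IsSyzygy (A : Type u) [Ring A] (K M : Type*) [AddCommGroup K] [Module A K]
    [AddCommGroup M] [Module A M] : Prop :=
  ∃ (P : Type u) (_ : AddCommGroup P) (_ : Module A P),
    Module.Finite A P ∧ Module.Projective A P ∧ IsExtension A K P M

variable {A : Type u} [Ring A]

theorem isSyzygySeq_iff {Xs : ℕ → Type u} [∀ i, AddCommGroup (Xs i)] [∀ i, Module A (Xs i)] :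
    IsSyzygySeq A Xs ↔ ∀ i, IsSyzygy A (Xs (i + 1)) (Xs i) := by
  simp only [IsSyzygySeq, IsSyzygy, isExtension_iff_range_eq_ker]

theorem exists_finite_isSyzygy [IsNoetherianRing A] (M : Type*) [AddCommGroup M] [Module A M]
    [Module.Finite A M] :
    ∃ (n : ℕ) (K : Submodule A (Fin n → A)), Module.Finite A K ∧ IsSyzygy A K M := by
  obtain ⟨n, p, hp⟩ := Module.Finite.exists_fin' A M
  exact ⟨n, LinearMap.ker p, inferInstance, Fin n → A, inferInstance, inferInstance,
    inferInstance, inferInstance, isExtension_ker hp⟩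

theorem IsSyzygy.prod_projective {K M : Type*} [AddCommGroup K] [Module A K] [AddCommGroup M]
    [Module A M] (h : IsSyzygy A K M) (P : Type u) [AddCommGroup P] [Module A P]
    [Module.Finite A P] [Module.Projective A P] : IsSyzygy A K (M × P) := by
  obtain ⟨Q, _, _, _, _, hQ⟩ := h
  exact ⟨Q × P, inferInstance, inferInstance, inferInstance, inferInstance,
    hQ.prod_middle_right P⟩

end Syzygy

section Degeneration

variable {A : Type u} [Ring A]
  {M M' N N' : Type u} [AddCommGroup M] [Module A M] [AddCommGroup M'] [Module A M']
  [AddCommGroup N] [Module A N] [AddCommGroup N'] [Module A N']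

theorem degLE_iff :
    DegLE A M N ↔ ∃ (Z : Type u) (_ : AddCommGroup Z) (_ : Module A Z),
      Module.Finite A Z ∧ IsExtension A N (M × Z) Z := by
  simp only [DegLE, isExtension_iff_range_eq_ker]

theorem DegLE.stDegLE_of_isSyzygy [IsNoetherianRing A] (h : DegLE A M N)
    (hM : IsSyzygy A M' M) (hN : IsSyzygy A N' N) : StDegLE A M' N' := by
  obtain ⟨Z, _, _, _, hE⟩ := degLE_iff.1 h
  obtain ⟨PM, _, _, _, _, hPM⟩ := hM
  obtain ⟨PN, _, _, _, _, hPN⟩ := hN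
  obtain ⟨n, Z', _, PZ, _, _, _, _, hPZ⟩ := exists_finite_isSyzygy (A := A) Z
  obtain ⟨E', hE', hext⟩ := hE.horseshoe hPN hPZ
  obtain ⟨e⟩ := hE'.schanuel (hPM.prod hPZ)
  let shuffle : ((M' × Z') × (PN × PZ)) ≃ₗ[A] ((M' × (PN × PZ)) × Z') :=
    LinearEquiv.prodAssoc A M' Z' (PN × PZ) ≪≫ₗ
      (LinearEquiv.refl A M').prodCongr (LinearEquiv.prodComm A Z' (PN × PZ)) ≪≫ₗ
      (LinearEquiv.prodAssoc A M' (PN × PZ) Z').symm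
  exact ⟨PN × PZ, inferInstance, inferInstance, PM × PZ, inferInstance, inferInstance,
    inferInstance, inferInstance, inferInstance, inferInstance,
    degLE_iff.2 ⟨Z', inferInstance, inferInstance, inferInstance,
      (hext.prod_left_middle (PM × PZ)).congr_middle (e ≪≫ₗ shuffle)⟩⟩

theorem StDegLE.of_isSyzygy [IsNoetherianRing A] (h : StDegLE A M N)
    (hM : IsSyzygy A M' M) (hN : IsSyzygy A N' N) : StDegLE A M' N' := by
  obtain ⟨P, _, _, Q, _, _, _, _, _, _, hPQ⟩ := h
  exact hPQ.stDegLE_of_isSyzygy (hM.prod_projective P) (hN.prod_projective Q)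

end Degeneration

theorem iterated_syzygy_preserves_stable_degeneration_general
    {A : Type u} [Ring A] [IsNoetherianRing A]
    {Xs : ℕ → Type u} [∀ i, AddCommGroup (Xs i)] [∀ i, Module A (Xs i)]
    {Ys : ℕ → Type u} [∀ i, AddCommGroup (Ys i)] [∀ i, Module A (Ys i)]
    (hXs : IsSyzygySeq A Xs) (hYs : IsSyzygySeq A Ys)
    (h : StDegLE A (Xs 0) (Ys 0)) (j : ℕ) : StDegLE A (Xs j) (Ys j) := by
  induction j with
  | zero => exact h
  | succ j ih => exact ih.of_isSyzygy (isSyzygySeq_iff.1 hXs j) (isSyzygySeq_iff.1 hYs j)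

/-- Iterated syzygies preserve stable degeneration. -/
theorem iterated_syzygy_preserves_stable_degeneration
    (k : Type u) [Field k] (A : Type u) [Ring A] [Algebra k A] [FiniteDimensional k A]
    (Xs : ℕ → Type u) [∀ i, AddCommGroup (Xs i)] [∀ i, Module A (Xs i)]
    [∀ i, Module.Finite A (Xs i)]
    (Ys : ℕ → Type u) [∀ i, AddCommGroup (Ys i)] [∀ i, Module A (Ys i)]
    [∀ i, Module.Finite A (Ys i)]
    (hXs : IsSyzygySeq A Xs) (hYs : IsSyzygySeq A Ys)
    (h : StDegLE A (Xs 0) (Ys 0)) :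
    ∀ j : ℕ, StDegLE A (Xs j) (Ys j) := by
  have : IsNoetherianRing A := isNoetherian_of_tower k inferInstance
  exact iterated_syzygy_preserves_stable_degeneration_general hXs hYs h
end

section
/- Antisymmetry of quasi-stable degeneration: let A be a finite-dimensional k-algebra, let X, Y be finitely generated left A-modules with fixed syzygy sequences (X_i) and (Y_i), and let m, n be integers. Suppose there exists an integer k₁ with k₁ ≥ m and k₁ ≥ n such that X_{k₁-m} ≤_st Y_{k₁-n}, and there exists an integer k₂ with k₂ ≥ m and k₂ ≥ n such that Y_{k₂-n} ≤_st X_{k₂-m}. Then there exist an integer k with k ≥ m and k ≥ n and finitely generated projective A-modules P and Q such that X_{k-m} ⊕ P ≅ Y_{k-n} ⊕ Q as A-modules. -/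
universe u

/-! Write `[M, U]` for the length of `Hom(M, U)` over `End U`. If `M ≤_deg N`, then
`[M, U] ≤ [N, U]` for every `U`; if moreover `[N, N] ≤ [M, N]`, then the identity of `N` extends
along `N → M ⊕ Z`, the sequence splits, and Krull-Schmidt cancellation of `Z` gives `M ≅ N`.

Given `X ⊕ P ≤_deg Y ⊕ Q` and `Y ⊕ P' ≤_deg X ⊕ Q'`, cancelling `[X, S]` and `[Y, S]` shows
`[P ⊕ P', S] ≤ [Q ⊕ Q', S]` for simple `S`, so `P ⊕ P'` is a quotient of `Q ⊕ Q'`. Both have the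
same length, hence `P ⊕ P' ≅ Q ⊕ Q'`, and now `[Y ⊕ Q, U] ≤ [X ⊕ P, U]` for every `U`.

By the horseshoe and Schanuel lemmas a stable degeneration passes to syzygies, so two degenerations
at different indices can be moved to a common one. -/

section Cancellation

variable {A : Type*} [Ring A]

theorem isLocalRing_end_of_forall_isCompl {M : Type*} [AddCommGroup M] [Module A M]
    [IsNoetherian A M] [IsArtinian A M] [Nontrivial M]
    (h : ∀ p q : Submodule A M, IsCompl p q → p = ⊥ ∨ q = ⊥) : IsLocalRing (Module.End A M) := by
  refine IsLocalRing.of_isUnit_or_isUnit_one_sub_self fun f ↦ ?_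
  obtain ⟨n, hn⟩ := Filter.eventually_atTop.mp f.eventually_isCompl_ker_pow_range_pow
  have fitting : IsCompl (LinearMap.ker (f ^ (n + 1))) (LinearMap.range (f ^ (n + 1))) :=
    hn (n + 1) n.le_succ
  rcases h _ _ fitting with hker | hrange
  · have hrange : LinearMap.range (f ^ (n + 1)) = ⊤ := by
      simpa only [hker, bot_sup_eq] using fitting.sup_eq_top
    refine .inl ((isUnit_pow_iff n.succ_ne_zero).mp ?_)
    exact (Module.End.isUnit_iff _).mpr
      ⟨LinearMap.ker_eq_bot.mp hker, LinearMap.range_eq_top.mp hrange⟩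
  · exact .inr (IsNilpotent.isUnit_one_sub ⟨n + 1, LinearMap.range_eq_bot.mp hrange⟩)

theorem induction_on_isLocalRing_end
    {motive : ∀ (M : Type u) [AddCommGroup M] [Module A M], Prop}
    (subsingleton : ∀ (M : Type u) [AddCommGroup M] [Module A M] [Subsingleton M], motive M)
    (isLocalRing_end : ∀ (M : Type u) [AddCommGroup M] [Module A M] [IsNoetherian A M]
      [IsLocalRing (Module.End A M)], motive M)
    (prod : ∀ (M N : Type u) [AddCommGroup M] [Module A M] [AddCommGroup N] [Module A N]
      [IsNoetherian A M] [IsNoetherian A N], motive M → motive N → motive (M × N))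
    (equiv : ∀ (M N : Type u) [AddCommGroup M] [Module A M] [AddCommGroup N] [Module A N],
      (M ≃ₗ[A] N) → motive M → motive N)
    (M : Type u) [AddCommGroup M] [Module A M] [IsNoetherian A M] [IsArtinian A M] : motive M := by
  induction hl : Module.length A M using WellFoundedLT.induction generalizing M with
  | ind l ih =>
    subst hl
    rcases subsingleton_or_nontrivial M with hM | hM
    · exact subsingleton M
    by_cases h : ∀ p q : Submodule A M, IsCompl p q → p = ⊥ ∨ q = ⊥
    · have := isLocalRing_end_of_forall_isCompl h
      exact isLocalRing_end M
    · push Not at h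
      obtain ⟨p, q, hpq, hp, hq⟩ := h
      have hp' : p ≠ ⊤ := fun hp' ↦ hq (by simpa [hp'] using hpq.inf_eq_bot)
      have hq' : q ≠ ⊤ := fun hq' ↦ hp (by simpa [hq'] using hpq.inf_eq_bot)
      exact equiv _ _ (Submodule.prodEquivOfIsCompl p q hpq) <|
        prod p q (ih _ (Submodule.length_lt hp') p rfl) (ih _ (Submodule.length_lt hq') q rfl)

theorem nonempty_equiv_quotient_range {E L N : Type*} [AddCommGroup E] [Module A E]
    [AddCommGroup L] [Module A L] [AddCommGroup N] [Module A N] {i : N →ₗ[A] E} {p : E →ₗ[A] L}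
    (hi : Function.Injective i) (hip : Function.Exact i p) {s : L →ₗ[A] E}
    (hs : IsUnit (p ∘ₗ s : Module.End A L)) : Nonempty (N ≃ₗ[A] E ⧸ LinearMap.range s) := by
  obtain ⟨hinj, hsurj⟩ := (Module.End.isUnit_iff _).mp hs
  refine ⟨LinearEquiv.ofBijective ((LinearMap.range s).mkQ ∘ₗ i) ⟨?_, fun y ↦ ?_⟩⟩
  · refine (injective_iff_map_eq_zero _).mpr fun x hx ↦ ?_
    obtain ⟨l, hl⟩ := (Submodule.Quotient.mk_eq_zero _).mp hx
    have hl0 : l = 0 := hinj <| by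
      rw [LinearMap.comp_apply, hl, hip.apply_apply_eq_zero, map_zero]
    rw [← map_eq_zero_iff i hi, ← hl, hl0, map_zero]
  · obtain ⟨y, rfl⟩ := Submodule.mkQ_surjective _ y
    obtain ⟨l, hl⟩ := hsurj (p y)
    obtain ⟨x, hx⟩ := (hip (y - s l)).mp (by rw [map_sub, ← hl, LinearMap.comp_apply, sub_self])
    refine ⟨x, (Submodule.Quotient.eq _).mpr ⟨-l, ?_⟩⟩
    rw [hx, map_neg]
    abel

theorem nonempty_equiv_of_prod_equiv_of_isLocalRing_end {L M N : Type*} [AddCommGroup L]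
    [Module A L] [AddCommGroup M] [Module A M] [AddCommGroup N] [Module A N]
    [IsLocalRing (Module.End A L)] (e : (M × L) ≃ₗ[A] (N × L)) : Nonempty (M ≃ₗ[A] N) := by
  let p : N × L →ₗ[A] L := LinearMap.snd A N L
  let q : N × L →ₗ[A] L := LinearMap.snd A M L ∘ₗ e.symm.toLinearMap
  let i : M →ₗ[A] N × L := e.toLinearMap ∘ₗ LinearMap.inl A M L
  have hi : Function.Injective i := e.injective.comp LinearMap.inl_injective
  have hiq : Function.Exact i q := by
    intro y
    obtain ⟨x, rfl⟩ := e.surjective y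
    have hexact : Function.Exact (LinearMap.inl A M L) (LinearMap.snd A M L) := .inl_snd
    simpa [i, q, e.injective.eq_iff] using hexact x
  suffices ∃ s : L →ₗ[A] N × L,
      IsUnit (p ∘ₗ s : Module.End A L) ∧ IsUnit (q ∘ₗ s : Module.End A L) by
    obtain ⟨s, hp, hq⟩ := this
    have hip : Function.Exact (LinearMap.inl A N L) p := .inl_snd
    obtain ⟨eN⟩ := nonempty_equiv_quotient_range LinearMap.inl_injective hip hp
    obtain ⟨eM⟩ := nonempty_equiv_quotient_range hi hiq hq
    exact ⟨eM.trans eN.symm⟩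
  let s : L →ₗ[A] N × L := LinearMap.inr A N L
  let t : L →ₗ[A] N × L := e.toLinearMap ∘ₗ LinearMap.inr A M L
  have hps : p ∘ₗ s = 1 := LinearMap.snd_comp_inr ..
  have hqt : q ∘ₗ t = 1 := by ext; simp [q, t]
  -- If neither `s` nor `t` works, then `p ∘ t` and `q ∘ s` are non-units, and `t - s` works.
  by_cases hpt : IsUnit (p ∘ₗ t : Module.End A L)
  · exact ⟨t, hpt, hqt ▸ isUnit_one⟩
  by_cases hqs : IsUnit (q ∘ₗ s : Module.End A L)
  · exact ⟨s, hps ▸ isUnit_one, hqs⟩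
  refine ⟨t - s, ?_, ?_⟩
  · rw [LinearMap.comp_sub, hps, ← IsUnit.neg_iff, neg_sub]
    exact (IsLocalRing.isUnit_or_isUnit_of_add_one (add_sub_cancel _ _)).resolve_left hpt
  · rw [LinearMap.comp_sub, hqt]
    exact (IsLocalRing.isUnit_or_isUnit_of_add_one (add_sub_cancel _ _)).resolve_left hqs

theorem nonempty_equiv_of_prod_equiv {M N Z : Type u} [AddCommGroup Z] [Module A Z]
    [IsNoetherian A Z] [IsArtinian A Z] [AddCommGroup M] [Module A M] [AddCommGroup N] [Module A N]
    (e : (M × Z) ≃ₗ[A] (N × Z)) : Nonempty (M ≃ₗ[A] N) := by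
  revert M N
  refine induction_on_isLocalRing_end (A := A)
    (motive := fun Z _ _ ↦ ∀ {M N : Type u} [AddCommGroup M] [Module A M] [AddCommGroup N]
      [Module A N], ((M × Z) ≃ₗ[A] (N × Z)) → Nonempty (M ≃ₗ[A] N)) ?_ ?_ ?_ ?_ Z
  · intro Z _ _ _ M N _ _ _ _ e
    have : Unique Z := ⟨⟨0⟩, fun _ ↦ Subsingleton.elim _ _⟩
    exact ⟨LinearEquiv.prodUnique.symm.trans (e.trans LinearEquiv.prodUnique)⟩
  · intro Z _ _ _ _ M N _ _ _ _ e
    exact nonempty_equiv_of_prod_equiv_of_isLocalRing_end e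
  · intro Z₁ Z₂ _ _ _ _ _ _ cancel₁ cancel₂ M N _ _ _ _ e
    have swap (K : Type u) [AddCommGroup K] [Module A K] : ((K × Z₁) × Z₂) ≃ₗ[A] K × (Z₁ × Z₂) :=
      LinearEquiv.prodAssoc A K Z₁ Z₂
    obtain ⟨e₁⟩ := cancel₂ ((swap M).trans (e.trans (swap N).symm))
    exact cancel₁ e₁
  · intro Z Z' _ _ _ _ f cancel M N _ _ _ _ e
    exact cancel <| ((LinearEquiv.refl A M).prodCongr f).trans <|
      e.trans ((LinearEquiv.refl A N).prodCongr f.symm)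

end Cancellation

section HomLength

/-- The endolength version of `dim Hom_A(M, U)`: the length of `Hom_A(M, U)` as a module over the
endomorphism ring of `U`. No ground ring is needed, and lengths are additive on exact sequences. -/
noncomputable def homLength (A : Type*) [Ring A] (M U : Type*) [AddCommGroup M] [Module A M]
    [AddCommGroup U] [Module A U] : ℕ∞ :=
  Module.length (Module.End A U) (M →ₗ[A] U)

/-- An endofinite module: one of finite length over its endomorphism ring. -/
def IsEndofinite (A U : Type*) [Ring A] [AddCommGroup U] [Module A U] : Prop :=
  IsFiniteLength (Module.End A U) U

variable {A : Type*} [Ring A] {M N Z U : Type*} [AddCommGroup M] [Module A M] [AddCommGroup N]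
  [Module A N] [AddCommGroup Z] [Module A Z] [AddCommGroup U] [Module A U]

theorem isEndofinite_of_artinAlgebra (R : Type*) [CommRing R] [IsArtinianRing R]
    [Algebra R A] [Module.Finite R A] [Module.Finite A U] : IsEndofinite A U := by
  let : Module R U := Module.compHom U (algebraMap R A)
  have : IsScalarTower R A U := .of_algebraMap_smul fun _ _ ↦ rfl
  have : Module.Finite R U := .trans A U
  have : IsScalarTower R (Module.End A U) U := ⟨fun _ _ _ ↦ rfl⟩
  exact isFiniteLength_iff_isNoetherian_isArtinian.mpr
    ⟨isNoetherian_of_tower R inferInstance, isArtinian_of_tower R inferInstance⟩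

theorem homLength_congr (e : M ≃ₗ[A] N) (U : Type*) [AddCommGroup U] [Module A U] :
    homLength A M U = homLength A N U :=
  (LinearEquiv.congrLeft U (Module.End A U) e).length_eq

theorem homLength_prod (M N U : Type*) [AddCommGroup M] [Module A M] [AddCommGroup N] [Module A N]
    [AddCommGroup U] [Module A U] :
    homLength A (M × N) U = homLength A M U + homLength A N U :=
  (LinearMap.coprodEquiv (Module.End A U)).symm.length_eq.trans <|
    Module.length_prod ..

theorem homLength_eq_zero_iff : homLength A M U = 0 ↔ Subsingleton (M →ₗ[A] U) :=
  Module.length_eq_zero_iff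

theorem homLength_le_of_surjective {g : M →ₗ[A] N} (hg : Function.Surjective g) (U : Type*)
    [AddCommGroup U] [Module A U] : homLength A N U ≤ homLength A M U :=
  Module.length_le_of_injective _
    (LinearMap.lcomp_injective_of_surjective (S := Module.End A U) (N := U) g hg)

theorem IsEndofinite.homLength_ne_top [Module.Finite A M] (hU : IsEndofinite A U) :
    homLength A M U ≠ ⊤ := by
  obtain ⟨n, g, hg⟩ := Module.Finite.exists_fin' A M
  refine ne_top_of_le_ne_top ?_ (homLength_le_of_surjective hg U)
  rw [homLength, (LinearEquiv.piRing A U (Fin n) (Module.End A U)).length_eq, Module.length_pi]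
  exact WithTop.mul_ne_top (ENat.card_lt_top.mpr inferInstance).ne (Module.length_ne_top_iff.mpr hU)

theorem exact_lcomp_lcomp (S : Type*) [Ring S] [Module S U] [SMulCommClass A S U]
    {f : N →ₗ[A] M} {g : M →ₗ[A] Z} (hg : Function.Surjective g) (hfg : Function.Exact f g) :
    Function.Exact (LinearMap.lcomp S U g) (LinearMap.lcomp S U f) := by
  refine fun φ ↦ ⟨fun hφ ↦ ?_, ?_⟩
  · have hker : LinearMap.range f ≤ LinearMap.ker φ := LinearMap.range_le_ker_iff.mpr hφ
    refine ⟨(LinearMap.range f).liftQ φ hker ∘ₗ (hfg.linearEquivOfSurjective hg).symm, ?_⟩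
    ext x
    exact congrArg ((LinearMap.range f).liftQ φ hker)
      ((hfg.linearEquivOfSurjective hg).symm_apply_apply (Submodule.Quotient.mk x))
  · rintro ⟨ψ, rfl⟩
    ext x
    simp [hfg.apply_apply_eq_zero]

theorem homLength_eq_add_length_range {f : N →ₗ[A] M} {g : M →ₗ[A] Z} (hg : Function.Surjective g)
    (hfg : Function.Exact f g) (U : Type*) [AddCommGroup U] [Module A U] :
    homLength A M U = homLength A Z U +
      Module.length (Module.End A U) (LinearMap.range (LinearMap.lcomp (Module.End A U) U f)) :=
  Module.length_eq_add_of_exact _ (LinearMap.rangeRestrict _)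
    (LinearMap.lcomp_injective_of_surjective (S := Module.End A U) (N := U) g hg)
    (LinearMap.surjective_rangeRestrict _)
    (fun φ ↦ by
      rw [← exact_lcomp_lcomp (Module.End A U) hg hfg φ, Subtype.ext_iff]
      rfl)

end HomLength

namespace DegLE

variable {A : Type u} [Ring A] {M N : Type u} [AddCommGroup M] [Module A M] [AddCommGroup N]
  [Module A N]

theorem homLength_le (h : DegLE A M N) {U : Type*} [AddCommGroup U] [Module A U]
    (hU : IsEndofinite A U) : homLength A M U ≤ homLength A N U := by
  obtain ⟨Z, _, _, _, f, g, -, hg, hfg⟩ := h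
  refine (ENat.add_le_add_iff_right hU.homLength_ne_top (k := homLength A Z U)).mp ?_
  rw [← homLength_prod, homLength_eq_add_length_range hg (LinearMap.exact_iff.mpr hfg.symm) U,
    add_comm]
  gcongr
  exact Module.length_le_of_injective _ (Submodule.subtype_injective _)

theorem length_eq [IsArtinianRing A] (h : DegLE A M N) :
    Module.length A M = Module.length A N := by
  obtain ⟨Z, _, _, _, f, g, hf, hg, hfg⟩ := h
  have key := Module.length_eq_add_of_exact f g hf hg (LinearMap.exact_iff.mpr hfg.symm)
  rw [Module.length_prod] at key
  exact ((ENat.add_left_injective_of_ne_top Module.length_ne_top) key.symm).symm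

theorem nonempty_equiv_of_homLength_le [IsArtinianRing A] [Module.Finite A N]
    (h : DegLE A M N) (hN : IsEndofinite A N) (hle : homLength A N N ≤ homLength A M N) :
    Nonempty (M ≃ₗ[A] N) := by
  obtain ⟨Z, _, _, _, f, g, -, hg, hfg⟩ := h
  have range_eq_top : LinearMap.range (LinearMap.lcomp (Module.End A N) N f) = ⊤ := by
    by_contra hne
    obtain ⟨_, _⟩ := isFiniteLength_iff_isNoetherian_isArtinian.mp <|
      Module.length_ne_top_iff.mp (hN.homLength_ne_top (M := N))
    refine (Submodule.length_lt hne).not_ge (hle.trans ?_)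
    refine (ENat.add_le_add_iff_right hN.homLength_ne_top (k := homLength A Z N)).mp ?_
    rw [← homLength_prod, homLength_eq_add_length_range hg (LinearMap.exact_iff.mpr hfg.symm) N,
      add_comm]
  obtain ⟨r, hr⟩ : ∃ r : M × Z →ₗ[A] N, r ∘ₗ f = LinearMap.id :=
    LinearMap.range_eq_top.mp range_eq_top LinearMap.id
  exact nonempty_equiv_of_prod_equiv (lequivProdOfLeftSplitExact hg hfg hr).symm

end DegLE

section Projective

variable {A : Type u} [Ring A]

theorem exists_surjective_of_isLocalRing_end {R R' S : Type*} [AddCommGroup R] [Module A R]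
    [AddCommGroup R'] [Module A R'] [AddCommGroup S] [Module A S] [Module.Projective A R]
    [Module.Projective A R'] [IsLocalRing (Module.End A R)] {π : R →ₗ[A] S} {q : R' →ₗ[A] S}
    [Nontrivial S] (hπ : Function.Surjective π) (hq : Function.Surjective q) :
    ∃ p : R' →ₗ[A] R, Function.Surjective p := by
  obtain ⟨p, hp⟩ := Module.projective_lifting_property π q hπ
  obtain ⟨i, hi⟩ := Module.projective_lifting_property q π hq
  have comp_eq : π ∘ₗ (p ∘ₗ i) = π := by rw [← LinearMap.comp_assoc, hp, hi]
  have not_isUnit : ¬ IsUnit (1 - p ∘ₗ i : Module.End A R) := fun h ↦ by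
    obtain ⟨s, hs⟩ := exists_ne (0 : S)
    obtain ⟨x, rfl⟩ := hπ s
    obtain ⟨y, rfl⟩ := ((Module.End.isUnit_iff _).mp h).2 x
    exact hs (by simpa [sub_eq_zero] using (LinearMap.congr_fun comp_eq y).symm)
  have isUnit : IsUnit (p ∘ₗ i : Module.End A R) :=
    (IsLocalRing.isUnit_or_isUnit_of_add_one (add_sub_cancel _ _)).resolve_right not_isUnit
  exact ⟨p, .of_comp (g := i) ((Module.End.isUnit_iff _).mp isUnit).2⟩

theorem exists_surjective_of_isLocalRing_end_of_homLength_le {R R' : Type u} [AddCommGroup R]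
    [Module A R] [AddCommGroup R'] [Module A R'] [Module.Finite A R] [Module.Projective A R]
    [Module.Projective A R'] [IsLocalRing (Module.End A R)]
    (h : ∀ (S : Type u) [AddCommGroup S] [Module A S] [IsSimpleModule A S],
      homLength A R S ≤ homLength A R' S) :
    ∃ p : R' →ₗ[A] R, Function.Surjective p := by
  have : Nontrivial R := not_subsingleton_iff_nontrivial.mp fun _ ↦
    one_ne_zero (α := Module.End A R) (Subsingleton.elim _ _)
  obtain ⟨m, hm, -⟩ := (eq_top_or_exists_le_coatom (⊥ : Submodule A R)).resolve_left bot_ne_top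
  have : IsSimpleModule A (R ⧸ m) := isSimpleModule_iff_isCoatom.mpr hm
  obtain ⟨q, hq⟩ : ∃ q : R' →ₗ[A] R ⧸ m, q ≠ 0 := by
    by_contra! hq
    have hom_R' : homLength A R' (R ⧸ m) = 0 :=
      homLength_eq_zero_iff.mpr ⟨fun f g ↦ (hq f).trans (hq g).symm⟩
    have hom_R : Subsingleton (R →ₗ[A] R ⧸ m) :=
      homLength_eq_zero_iff.mp (nonpos_iff_eq_zero.mp (hom_R' ▸ h (R ⧸ m)))
    exact hm.1 (by rw [← m.ker_mkQ, Subsingleton.elim m.mkQ 0, LinearMap.ker_zero])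
  have := IsSimpleModule.nontrivial A (R ⧸ m)
  exact exists_surjective_of_isLocalRing_end m.mkQ_surjective (LinearMap.surjective_of_ne_zero hq)

theorem exists_surjective_of_homLength_le
    (hA : ∀ (S : Type u) [AddCommGroup S] [Module A S] [IsSimpleModule A S], IsEndofinite A S)
    {R R' : Type u} [AddCommGroup R] [Module A R] [IsNoetherian A R] [IsArtinian A R]
    [AddCommGroup R'] [Module A R'] [Module.Projective A R] [Module.Projective A R']
    (h : ∀ (S : Type u) [AddCommGroup S] [Module A S] [IsSimpleModule A S],
      homLength A R S ≤ homLength A R' S) :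
    ∃ p : R' →ₗ[A] R, Function.Surjective p := by
  revert R'
  revert ‹Module.Projective A R›
  refine induction_on_isLocalRing_end (A := A)
    (motive := fun R _ _ ↦ ∀ [Module.Projective A R] {R' : Type u} [AddCommGroup R'] [Module A R']
      [Module.Projective A R'], (∀ (S : Type u) [AddCommGroup S] [Module A S] [IsSimpleModule A S],
      homLength A R S ≤ homLength A R' S) → ∃ p : R' →ₗ[A] R, Function.Surjective p) ?_ ?_ ?_ ?_ R
  · intro R _ _ _ _ R' _ _ _ _
    exact ⟨0, fun x ↦ ⟨0, Subsingleton.elim _ _⟩⟩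
  · intro R _ _ _ _ _ R' _ _ _ h
    exact exists_surjective_of_isLocalRing_end_of_homLength_le h
  · intro R₁ R₂ _ _ _ _ _ _ h₁ h₂ _ R' _ _ _ h
    have : Module.Projective A R₁ :=
      .of_split (.inl A R₁ R₂) (.fst A R₁ R₂) (LinearMap.fst_comp_inl ..)
    have : Module.Projective A R₂ :=
      .of_split (.inr A R₁ R₂) (.snd A R₁ R₂) (LinearMap.snd_comp_inr ..)
    have le_prod (S : Type u) [AddCommGroup S] [Module A S] :
        homLength A R₁ S ≤ homLength A (R₁ × R₂) S := by
      rw [homLength_prod]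
      exact le_self_add
    obtain ⟨p, hp⟩ := h₁ fun S _ _ _ ↦ (le_prod S).trans (h S)
    obtain ⟨s, hs⟩ := Module.projective_lifting_property p LinearMap.id hp
    let e : (LinearMap.ker p × R₁) ≃ₗ[A] R' := lequivProdOfRightSplitExact
      (Submodule.subtype_injective _) (Submodule.range_subtype _) hs
    have : Module.Projective A (LinearMap.ker p) :=
      .of_split (e.toLinearMap ∘ₗ .inl A _ R₁) (.fst A _ R₁ ∘ₗ e.symm.toLinearMap) (by ext; simp)
    obtain ⟨p', hp'⟩ := h₂ (R' := LinearMap.ker p) fun S _ _ _ ↦ by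
      refine (ENat.add_le_add_iff_left ((hA S).homLength_ne_top (M := R₁))).mp ?_
      rw [← homLength_prod, add_comm, ← homLength_prod, homLength_congr e]
      exact h S
    let e' : R' ≃ₗ[A] R₁ × LinearMap.ker p := e.symm.trans (.prodComm A _ R₁)
    exact ⟨LinearMap.prodMap .id p' ∘ₗ e'.toLinearMap,
      (Function.surjective_id.prodMap hp').comp e'.surjective⟩
  · intro R₁ R₂ _ _ _ _ e h₁ _ R' _ _ _ h
    have : Module.Projective A R₁ := .of_equiv e.symm
    obtain ⟨p, hp⟩ := h₁ fun S _ _ _ ↦ (homLength_congr e S).trans_le (h S)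
    exact ⟨e.toLinearMap ∘ₗ p, e.surjective.comp hp⟩

theorem nonempty_equiv_of_homLength_le_of_length_eq
    (hA : ∀ (S : Type u) [AddCommGroup S] [Module A S] [IsSimpleModule A S], IsEndofinite A S)
    {R R' : Type u} [AddCommGroup R] [Module A R] [IsNoetherian A R] [IsArtinian A R]
    [AddCommGroup R'] [Module A R'] [Module.Projective A R] [Module.Projective A R']
    (h : ∀ (S : Type u) [AddCommGroup S] [Module A S] [IsSimpleModule A S],
      homLength A R S ≤ homLength A R' S)
    (hlength : Module.length A R' = Module.length A R) : Nonempty (R' ≃ₗ[A] R) := by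
  obtain ⟨p, hp⟩ := exists_surjective_of_homLength_le hA h
  have key := Module.length_eq_add_of_exact _ _ (Submodule.subtype_injective _) hp
    p.exact_subtype_ker_map
  have : Subsingleton (LinearMap.ker p) := by
    refine (Module.length_eq_zero_iff (R := A)).mp ?_
    refine ENat.add_left_injective_of_ne_top (Module.length_ne_top (R := A) (M := R)) ?_
    simp only [← key, hlength, zero_add]
  exact ⟨.ofBijective p ⟨LinearMap.ker_eq_bot.mp (Submodule.subsingleton_iff_eq_bot.mp this), hp⟩⟩

end Projective

theorem enat_add_le_add_of_cross {a b c d c' d' : ℕ∞} (ha : a ≠ ⊤) (hb : b ≠ ⊤)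
    (h : a + c ≤ b + d) (h' : b + c' ≤ a + d') : c + c' ≤ d + d' := by
  refine (ENat.add_le_add_iff_left (WithTop.add_ne_top.mpr ⟨ha, hb⟩)).mp ?_
  calc a + b + (c + c') = a + c + (b + c') := add_add_add_comm ..
    _ ≤ b + d + (a + d') := add_le_add h h'
    _ = a + b + (d + d') := by rw [add_add_add_comm, add_comm b a]

namespace StDegLE

variable {A : Type u} [Ring A] {X Y : Type u} [AddCommGroup X] [Module A X] [AddCommGroup Y]
  [Module A Y]

theorem antisymm [IsArtinianRing A] [Module.Finite A X] [Module.Finite A Y]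
    (hA : ∀ (U : Type u) [AddCommGroup U] [Module A U] [Module.Finite A U], IsEndofinite A U)
    (hXY : StDegLE A X Y) (hYX : StDegLE A Y X) :
    ∃ (P : Type u) (_ : AddCommGroup P) (_ : Module A P)
      (Q : Type u) (_ : AddCommGroup Q) (_ : Module A Q),
      Module.Finite A P ∧ Module.Projective A P ∧
      Module.Finite A Q ∧ Module.Projective A Q ∧ Nonempty ((X × P) ≃ₗ[A] (Y × Q)) := by
  obtain ⟨P, _, _, Q, _, _, _, _, _, _, hXPYQ⟩ := hXY
  obtain ⟨P', _, _, Q', _, _, _, _, _, _, hYPXQ⟩ := hYX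
  have finite (M U : Type u) [AddCommGroup M] [Module A M] [Module.Finite A M] [AddCommGroup U]
      [Module A U] [Module.Finite A U] : homLength A M U ≠ ⊤ := (hA U).homLength_ne_top
  have homLength_le (U : Type u) [AddCommGroup U] [Module A U] [Module.Finite A U] :
      homLength A (P × P') U ≤ homLength A (Q × Q') U := by
    simpa only [homLength_prod] using enat_add_le_add_of_cross (finite X U) (finite Y U)
      (by simpa only [homLength_prod] using hXPYQ.homLength_le (hA U))
      (by simpa only [homLength_prod] using hYPXQ.homLength_le (hA U))
  have length_eq : Module.length A (Q × Q') = Module.length A (P × P') := by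
    have hX : Module.length A X ≠ ⊤ := Module.length_ne_top
    have hY : Module.length A Y ≠ ⊤ := Module.length_ne_top
    have hXP : Module.length A X + Module.length A P = Module.length A Y + Module.length A Q := by
      simpa only [Module.length_prod] using hXPYQ.length_eq
    have hYP : Module.length A Y + Module.length A P' = Module.length A X + Module.length A Q' := by
      simpa only [Module.length_prod] using hYPXQ.length_eq
    simpa only [Module.length_prod] using le_antisymm
      (enat_add_le_add_of_cross hY hX hXP.ge hYP.ge) (enat_add_le_add_of_cross hX hY hXP.le hYP.le)
  obtain ⟨e⟩ := nonempty_equiv_of_homLength_le_of_length_eq (fun S _ _ _ ↦ hA S)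
    (fun S _ _ _ ↦ homLength_le S) length_eq
  refine ⟨P, ‹_›, ‹_›, Q, ‹_›, ‹_›, ‹_›, ‹_›, ‹_›, ‹_›,
    hXPYQ.nonempty_equiv_of_homLength_le (hA _) ?_⟩
  have hYP : homLength A P' (Y × Q) + homLength A Y (Y × Q) ≤
      homLength A Q' (Y × Q) + homLength A X (Y × Q) := by
    simpa only [homLength_prod, add_comm] using hYPXQ.homLength_le (hA (Y × Q))
  have hQP : homLength A Q' (Y × Q) + homLength A Q (Y × Q) ≤
      homLength A P' (Y × Q) + homLength A P (Y × Q) := by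
    simpa only [homLength_prod, add_comm] using (homLength_congr e (Y × Q)).le
  simpa only [homLength_prod] using
    enat_add_le_add_of_cross (finite P' (Y × Q)) (finite Q' (Y × Q)) hYP hQP

end StDegLE

section Syzygy

variable {A : Type*} [Ring A] {M N E Z P Q : Type*} [AddCommGroup M] [Module A M] [AddCommGroup N]
  [Module A N] [AddCommGroup E] [Module A E] [AddCommGroup Z] [Module A Z] [AddCommGroup P]
  [Module A P] [AddCommGroup Q] [Module A Q]

theorem nonempty_ker_coprod_equiv_ker_prod [Module.Projective A Q] {p : P →ₗ[A] M}
    (hp : Function.Surjective p) (q : Q →ₗ[A] M) :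
    Nonempty (LinearMap.ker (p.coprod q) ≃ₗ[A] LinearMap.ker p × Q) := by
  obtain ⟨β, hβ⟩ := Module.projective_lifting_property p q hp
  let i : LinearMap.ker p →ₗ[A] LinearMap.ker (p.coprod q) :=
    (LinearMap.inl A P Q).restrict fun x hx ↦ by simpa using hx
  let r : LinearMap.ker (p.coprod q) →ₗ[A] Q := .snd A P Q ∘ₗ Submodule.subtype _
  let s : Q →ₗ[A] LinearMap.ker (p.coprod q) :=
    ((-β).prod .id).codRestrict _ fun y ↦ by simp [← hβ]
  refine ⟨(lequivProdOfRightSplitExact (j := i) (g := r) (f := s) ?_ ?_ rfl).symm⟩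
  · exact fun x y hxy ↦ Subtype.ext (congrArg (fun z ↦ z.1.1) hxy)
  · ext ⟨⟨x, y⟩, hxy⟩
    refine ⟨?_, fun hy ↦ ?_⟩
    · rintro ⟨z, hz⟩
      exact (congrArg (fun w ↦ w.1.2) hz).symm
    · obtain rfl : y = 0 := hy
      exact ⟨⟨x, by simpa using hxy⟩, rfl⟩

theorem schanuel [Module.Projective A P] [Module.Projective A Q] {p : P →ₗ[A] M} {q : Q →ₗ[A] M}
    (hp : Function.Surjective p) (hq : Function.Surjective q) :
    Nonempty ((LinearMap.ker p × Q) ≃ₗ[A] (LinearMap.ker q × P)) := by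
  obtain ⟨eP⟩ := nonempty_ker_coprod_equiv_ker_prod hp q
  obtain ⟨eQ⟩ := nonempty_ker_coprod_equiv_ker_prod hq p
  have swap : (LinearMap.ker (p.coprod q)).map (LinearEquiv.prodComm A P Q).toLinearMap =
      LinearMap.ker (q.coprod p) := by
    ext ⟨x, y⟩
    simp [add_comm]
  exact ⟨eP.symm.trans (((LinearEquiv.prodComm A P Q).ofSubmodules _ _ swap).trans eQ)⟩

/-- The isomorphism `ker (p × q) ≅ ker p × ker q`. -/
def kerProdMapEquiv (p : P →ₗ[A] M) (q : Q →ₗ[A] N) :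
    LinearMap.ker (p.prodMap q) ≃ₗ[A] LinearMap.ker p × LinearMap.ker q where
  toFun x := (⟨x.1.1, congrArg Prod.fst x.2⟩, ⟨x.1.2, congrArg Prod.snd x.2⟩)
  invFun x := ⟨(x.1, x.2), Prod.ext x.1.2 x.2.2⟩
  map_add' _ _ := rfl
  map_smul' _ _ := rfl
  left_inv _ := rfl
  right_inv _ := rfl

/-- The isomorphism `ker (p × id) ≅ ker p`. -/
def kerProdMapIdEquiv (p : P →ₗ[A] M) (W : Type*) [AddCommGroup W] [Module A W] :
    LinearMap.ker (p.prodMap (LinearMap.id : W →ₗ[A] W)) ≃ₗ[A] LinearMap.ker p :=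
  have : Unique (LinearMap.ker (LinearMap.id : W →ₗ[A] W)) := ⟨⟨0⟩, fun w ↦ Subtype.ext w.2⟩
  (kerProdMapEquiv p .id).trans .prodUnique

theorem horseshoe [Module.Projective A Q] {f : N →ₗ[A] E} {g : E →ₗ[A] Z}
    (hf : Function.Injective f) (hg : Function.Surjective g) (hfg : Function.Exact f g)
    {p : P →ₗ[A] N} {q : Q →ₗ[A] Z} (hp : Function.Surjective p) (hq : Function.Surjective q) :
    ∃ (c : P × Q →ₗ[A] E) (i : LinearMap.ker p →ₗ[A] LinearMap.ker c)
      (r : LinearMap.ker c →ₗ[A] LinearMap.ker q),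
      Function.Surjective c ∧ Function.Injective i ∧ Function.Surjective r ∧
        Function.Exact i r := by
  obtain ⟨s, hs⟩ := Module.projective_lifting_property g q hg
  let c : P × Q →ₗ[A] E := (f ∘ₗ p).coprod s
  have g_c (x : P × Q) : g (c x) = q x.2 := by simp [c, hfg.apply_apply_eq_zero, ← hs]
  have exists_lift {e : E} {y : Q} (hy : q y = g e) : ∃ x : P, c (x, y) = e := by
    obtain ⟨n, hn⟩ := (hfg (e - s y)).mp (by simp [← hy, ← hs])
    obtain ⟨x, rfl⟩ := hp n
    exact ⟨x, by simp [c, hn]⟩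
  refine ⟨c, (LinearMap.inl A P Q).restrict fun x hx ↦ ?_,
    (LinearMap.snd A P Q).restrict fun x hx ↦ ?_, fun e ↦ ?_, fun x y hxy ↦ ?_, fun y ↦ ?_, ?_⟩
  · simpa [c] using congrArg f hx
  · simpa [← g_c] using congrArg g hx
  · obtain ⟨y, hy⟩ := hq (g e)
    obtain ⟨x, hx⟩ := exists_lift hy
    exact ⟨_, hx⟩
  · exact Subtype.ext (congrArg (fun z ↦ z.1.1) hxy)
  · obtain ⟨x, hx⟩ := exists_lift (e := 0) (y := y.1) (by simp)
    exact ⟨⟨(x, y), hx⟩, rfl⟩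
  · rintro ⟨⟨x, y⟩, hxy⟩
    refine ⟨fun hy ↦ ?_, ?_⟩
    · obtain rfl : y = 0 := congrArg Subtype.val hy
      exact ⟨⟨x, hf (by simpa [c] using hxy)⟩, rfl⟩
    · rintro ⟨z, hz⟩
      exact Subtype.ext (congrArg (fun w ↦ w.1.2) hz).symm

end Syzygy

section StableSyzygy

variable {A : Type u} [Ring A] {M N M' N' : Type u} [AddCommGroup M] [Module A M] [AddCommGroup N]
  [Module A N] [AddCommGroup M'] [Module A M'] [AddCommGroup N'] [Module A N']

theorem DegLE.of_exact_of_equiv {E W Z : Type u} [AddCommGroup E] [Module A E] [AddCommGroup W]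
    [Module A W] [AddCommGroup Z] [Module A Z] [Module.Finite A Z] {f : N →ₗ[A] E} {g : E →ₗ[A] Z}
    (hf : Function.Injective f) (hg : Function.Surjective g) (hfg : Function.Exact f g)
    (e : (E × W) ≃ₗ[A] (M × Z)) : DegLE A M (N × W) := by
  refine ⟨Z, _, _, ‹_›, e.toLinearMap ∘ₗ f.prodMap .id, g ∘ₗ .fst A E W ∘ₗ e.symm.toLinearMap,
    e.injective.comp (hf.prodMap Function.injective_id),
    hg.comp (Prod.fst_surjective.comp e.symm.surjective), ?_⟩
  refine (LinearMap.exact_iff.mp fun y ↦ ?_).symm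
  obtain ⟨⟨x, w⟩, rfl⟩ := e.surjective y
  simp [e.injective.eq_iff, hfg x]

theorem DegLE.congr (eM : M ≃ₗ[A] M') (eN : N ≃ₗ[A] N') (h : DegLE A M N) : DegLE A M' N' := by
  obtain ⟨Z, _, _, _, f, g, hf, hg, hfg⟩ := h
  let e : (M × Z) ≃ₗ[A] (M' × Z) := eM.prodCongr (.refl A Z)
  refine ⟨Z, _, _, ‹_›, e.toLinearMap ∘ₗ f ∘ₗ eN.symm.toLinearMap, g ∘ₗ e.symm.toLinearMap,
    e.injective.comp (hf.comp eN.symm.injective), hg.comp e.symm.surjective, ?_⟩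
  simp [LinearMap.range_comp, LinearMap.ker_comp, hfg, Submodule.map_equiv_eq_comap_symm]

theorem StDegLE.congr (eM : M ≃ₗ[A] M') (eN : N ≃ₗ[A] N') (h : StDegLE A M N) :
    StDegLE A M' N' := by
  obtain ⟨P, _, _, Q, _, _, hP, hP', hQ, hQ', h⟩ := h
  exact ⟨P, _, _, Q, _, _, hP, hP', hQ, hQ',
    h.congr (eM.prodCongr (.refl A P)) (eN.prodCongr (.refl A Q))⟩

variable [IsNoetherianRing A] {P Q : Type u} [AddCommGroup P] [Module A P]
  [Module.Finite A P] [Module.Projective A P] [AddCommGroup Q] [Module A Q]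
  [Module.Finite A Q] [Module.Projective A Q]

theorem DegLE.stDegLE_ker (h : DegLE A M N) {p : P →ₗ[A] M} {q : Q →ₗ[A] N}
    (hp : Function.Surjective p) (hq : Function.Surjective q) :
    StDegLE A (LinearMap.ker p) (LinearMap.ker q) := by
  obtain ⟨Z, _, _, _, f, g, hf, hg, hfg⟩ := h
  obtain ⟨n, r, hr⟩ := Module.Finite.exists_fin' A Z
  obtain ⟨c, i, g', hc, hi, hg', hig'⟩ := horseshoe hf hg (LinearMap.exact_iff.mpr hfg.symm) hq hr
  have hpr : Function.Surjective (p.prodMap r) := hp.prodMap hr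
  obtain ⟨e⟩ := schanuel hc hpr
  let W := Q × (Fin n → A)
  let rightComm : ((LinearMap.ker p × LinearMap.ker r) × W) ≃ₗ[A]
      (LinearMap.ker p × W) × LinearMap.ker r :=
    (LinearEquiv.prodAssoc ..).trans <|
      ((LinearEquiv.refl A _).prodCongr (.prodComm ..)).trans (LinearEquiv.prodAssoc ..).symm
  exact ⟨W, _, _, P × (Fin n → A), _, _, inferInstance, inferInstance, inferInstance,
    inferInstance, .of_exact_of_equiv hi hg' hig' <|
      e.trans <| ((kerProdMapEquiv p r).prodCongr (.refl A _)).trans rightComm⟩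

theorem StDegLE.ker (h : StDegLE A M N) {p : P →ₗ[A] M} {q : Q →ₗ[A] N}
    (hp : Function.Surjective p) (hq : Function.Surjective q) :
    StDegLE A (LinearMap.ker p) (LinearMap.ker q) := by
  obtain ⟨R, _, _, S, _, _, _, _, _, _, h⟩ := h
  have hpR : Function.Surjective (p.prodMap (LinearMap.id : R →ₗ[A] R)) :=
    hp.prodMap Function.surjective_id
  have hqS : Function.Surjective (q.prodMap (LinearMap.id : S →ₗ[A] S)) :=
    hq.prodMap Function.surjective_id
  exact (h.stDegLE_ker hpR hqS).congr (kerProdMapIdEquiv p R) (kerProdMapIdEquiv q S)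

end StableSyzygy

namespace IsSyzygySeq

variable {A : Type u} [Ring A] {Xs Ys : ℕ → Type u} [∀ i, AddCommGroup (Xs i)]
  [∀ i, Module A (Xs i)] [∀ i, AddCommGroup (Ys i)] [∀ i, Module A (Ys i)]

theorem finite (h : IsSyzygySeq A Xs) (i : ℕ) : Module.Finite A (Xs i) := by
  obtain ⟨P, _, _, _, -, -, g, -, hg, -⟩ := h i
  exact .of_surjective g hg

theorem exists_equiv_ker (h : IsSyzygySeq A Xs) (i : ℕ) :
    ∃ (P : Type u) (_ : AddCommGroup P) (_ : Module A P),
      Module.Finite A P ∧ Module.Projective A P ∧ ∃ g : P →ₗ[A] Xs i,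
        Function.Surjective g ∧ Nonempty (LinearMap.ker g ≃ₗ[A] Xs (i + 1)) := by
  obtain ⟨P, _, _, _, _, f, g, hf, hg, hfg⟩ := h i
  exact ⟨P, _, _, ‹_›, ‹_›, g, hg,
    ⟨((LinearEquiv.ofInjective f hf).trans (LinearEquiv.ofEq _ _ hfg)).symm⟩⟩

theorem stDegLE_add [IsNoetherianRing A] (hX : IsSyzygySeq A Xs) (hY : IsSyzygySeq A Ys) {i j : ℕ}
    (h : StDegLE A (Xs i) (Ys j)) (t : ℕ) : StDegLE A (Xs (i + t)) (Ys (j + t)) := by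
  induction t with
  | zero => exact h
  | succ t ih =>
    obtain ⟨P, _, _, _, _, p, hp, ⟨eX⟩⟩ := hX.exists_equiv_ker (i + t)
    obtain ⟨Q, _, _, _, _, q, hq, ⟨eY⟩⟩ := hY.exists_equiv_ker (j + t)
    exact (ih.ker hp hq).congr eX eY

end IsSyzygySeq

theorem quasi_stable_degeneration_antisymm_general (A : Type u) [Ring A] [IsArtinianRing A]
    (hA : ∀ (U : Type u) [AddCommGroup U] [Module A U] [Module.Finite A U], IsEndofinite A U)
    (Xs : ℕ → Type u) [∀ i, AddCommGroup (Xs i)] [∀ i, Module A (Xs i)]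
    (Ys : ℕ → Type u) [∀ i, AddCommGroup (Ys i)] [∀ i, Module A (Ys i)]
    (hXs : IsSyzygySeq A Xs) (hYs : IsSyzygySeq A Ys) (m n : ℤ)
    (h₁ : ∃ k₁ : ℤ, m ≤ k₁ ∧ n ≤ k₁ ∧ StDegLE A (Xs (k₁ - m).toNat) (Ys (k₁ - n).toNat))
    (h₂ : ∃ k₂ : ℤ, m ≤ k₂ ∧ n ≤ k₂ ∧ StDegLE A (Ys (k₂ - n).toNat) (Xs (k₂ - m).toNat)) :
    ∃ k : ℤ, m ≤ k ∧ n ≤ k ∧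
      ∃ (P : Type u) (_ : AddCommGroup P) (_ : Module A P)
        (Q : Type u) (_ : AddCommGroup Q) (_ : Module A Q),
        Module.Finite A P ∧ Module.Projective A P ∧
        Module.Finite A Q ∧ Module.Projective A Q ∧
        Nonempty ((Xs (k - m).toNat × P) ≃ₗ[A] (Ys (k - n).toNat × Q)) := by
  obtain ⟨k₁, hm₁, hn₁, hXY⟩ := h₁
  obtain ⟨k₂, hm₂, hn₂, hYX⟩ := h₂
  let k := max k₁ k₂
  have shift {a c : ℤ} (hca : c ≤ a) (hak : a ≤ k) :
      (a - c).toNat + (k - a).toNat = (k - c).toNat := by omega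
  have hXY' : StDegLE A (Xs (k - m).toNat) (Ys (k - n).toNat) := by
    rw [← shift hm₁ (le_max_left ..), ← shift hn₁ (le_max_left ..)]
    exact hXs.stDegLE_add hYs hXY _
  have hYX' : StDegLE A (Ys (k - n).toNat) (Xs (k - m).toNat) := by
    rw [← shift hm₂ (le_max_right ..), ← shift hn₂ (le_max_right ..)]
    exact hYs.stDegLE_add hXs hYX _
  have := hXs.finite (k - m).toNat
  have := hYs.finite (k - n).toNat
  exact ⟨k, hm₁.trans (le_max_left ..), hn₁.trans (le_max_left ..), hXY'.antisymm hA hYX'⟩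

/-- Antisymmetry of quasi-stable degeneration. -/
theorem quasi_stable_degeneration_antisymm
    (k : Type u) [Field k] (A : Type u) [Ring A] [Algebra k A] [FiniteDimensional k A]
    (Xs : ℕ → Type u) [∀ i, AddCommGroup (Xs i)] [∀ i, Module A (Xs i)]
    [∀ i, Module.Finite A (Xs i)]
    (Ys : ℕ → Type u) [∀ i, AddCommGroup (Ys i)] [∀ i, Module A (Ys i)]
    [∀ i, Module.Finite A (Ys i)]
    (hXs : IsSyzygySeq A Xs) (hYs : IsSyzygySeq A Ys)
    (m n : ℤ)
    (h₁ : ∃ k₁ : ℤ, m ≤ k₁ ∧ n ≤ k₁ ∧ StDegLE A (Xs (k₁ - m).toNat) (Ys (k₁ - n).toNat))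
    (h₂ : ∃ k₂ : ℤ, m ≤ k₂ ∧ n ≤ k₂ ∧ StDegLE A (Ys (k₂ - n).toNat) (Xs (k₂ - m).toNat)) :
    ∃ k : ℤ, m ≤ k ∧ n ≤ k ∧
      ∃ (P : Type u) (_ : AddCommGroup P) (_ : Module A P)
        (Q : Type u) (_ : AddCommGroup Q) (_ : Module A Q),
        Module.Finite A P ∧ Module.Projective A P ∧
        Module.Finite A Q ∧ Module.Projective A Q ∧
        Nonempty ((Xs (k - m).toNat × P) ≃ₗ[A] (Ys (k - n).toNat × Q)) := by
  have := IsArtinianRing.of_finite k A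
  exact quasi_stable_degeneration_antisymm_general A
    (fun _ _ _ _ ↦ isEndofinite_of_artinAlgebra k) Xs Ys hXs hYs m n h₁ h₂
end
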